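/- arXiv:1401.6992 — 2 statements merged into one kernel-verified Lean document; each statement's English description precedes it below -/
import Mathlib

section
/- Let d ≥ 3. There exist constants C > 1 and 0 < c < 1, depending only on d, such that for every odd prime power q, all i, j ∈ F_q with i ≠ 0 and j ≠ 0, and all E ⊆ S_i and F ⊆ S_j with |E||F| ≥ C q^d, one has |D(E,F)| ≥ c q. -/
/-!
Since `‖x - y‖ = i + j - 2 x·y` for `x ∈ S_i`, `y ∈ S_j`, and `2` is invertible, it suffices to bound
from below the number of dot products `x·y`. Put `M(x) = #{(y, y') ∈ F² : x·y = x·y'}`.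

* Cauchy–Schwarz: if all `x·y`, `y ∈ F`, lie in `T`, then `|F|² ≤ |T| M(x)` (`sq_card_le`). With
  `T = F_q` this says that the excess `W(x) = q M(x) - |F|²` is nonnegative.
* Double counting over all `x` gives `∑ₓ W(x) = |F| (q - 1) q^d` (`sum_excess`), because a nonzero
  vector has exactly `q^{d-1}` vectors orthogonal to it.
* `W` is constant on punctured lines through the origin, and such a line meets the sphere `S_i`,
  `i ≠ 0`, in at most two points, so `(q - 1) ∑_{x ∈ E} W(x) ≤ 2 ∑ₓ W(x)` (`sum_le_of_homogeneous`).

Hence `q ∑_{x ∈ E} M(x) ≤ |E||F|² + 2 |F| q^d ≤ 2 |E||F|²` as soon as `|E||F| ≥ 2 q^d`. Summing the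
Cauchy–Schwarz bound over `x ∈ E`, with `T` the set of all dot products, yields
`q |E||F|² ≤ 2 |T| |E||F|²`, i.e. `|T| ≥ q / 2`. So `C = 2` and `c = 1/2` work.
-/

open Finset

noncomputable section

/-- dot product on `Fin d → K` -/
def fqDot {K : Type} [Field K] {d : ℕ} (x y : Fin d → K) : K := ∑ i, x i * y i

/-- dot product set Π(E,F) -/
def dotSet {K : Type} [Field K] [DecidableEq K] {d : ℕ}
    (E F : Finset (Fin d → K)) : Finset K :=
  (E ×ˢ F).image fun p => fqDot p.1 p.2

/-- punctured line through the origin and x -/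
def lineThrough {K : Type} [Field K] [Fintype K] [DecidableEq K] {d : ℕ}
    (x : Fin d → K) : Finset (Fin d → K) :=
  univ.filter fun y => ∃ s : K, s ≠ 0 ∧ y = s • x

/-- Fourier transform of the indicator of F -/
def ftransform {K : Type} [Field K] [Fintype K] {d : ℕ}
    (ψ : AddChar K ℂ) (F : Finset (Fin d → K)) (m : Fin d → K) : ℂ :=
  ((Fintype.card K : ℂ) ^ d)⁻¹ * ∑ x ∈ F, ψ (-(fqDot x m))

/-- the quantity 𝔅(E,F) -/
def Bquant {K : Type} [Field K] [Fintype K] [DecidableEq K] {d : ℕ}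
    (ψ : AddChar K ℂ) (E F : Finset (Fin d → K)) : ℝ :=
  ∑ x ∈ univ.filter (fun x : Fin d → K => x ≠ 0),
    ((E ∩ lineThrough x).card : ℝ) * ‖ftransform ψ F x‖ ^ 2
/-- sphere of radius j in F_q^d -/
def sphereF {K : Type} [Field K] [Fintype K] [DecidableEq K] {d : ℕ} (j : K) :
    Finset (Fin d → K) :=
  univ.filter fun x => ∑ i, x i ^ 2 = j

/-- distance set D(E,F) -/
def distSet {K : Type} [Field K] [DecidableEq K] {d : ℕ}
    (E F : Finset (Fin d → K)) : Finset K :=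
  (E ×ˢ F).image fun p => ∑ i, (p.1 i - p.2 i) ^ 2

section Helpers

variable {K : Type} [Field K] {d : ℕ}

lemma fqDot_sub (x y z : Fin d → K) : fqDot x (y - z) = fqDot x y - fqDot x z := by
  simp [fqDot, mul_sub, Finset.sum_sub_distrib]

lemma fqDot_smul (s : K) (x y : Fin d → K) : fqDot (s • x) y = s * fqDot x y := by
  simp [fqDot, Finset.mul_sum, mul_assoc]

lemma sum_sub_sq (x y : Fin d → K) :
    ∑ k, (x k - y k) ^ 2 = ∑ k, x k ^ 2 + ∑ k, y k ^ 2 - 2 * fqDot x y := by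
  simp only [fqDot, Finset.mul_sum]
  rw [← Finset.sum_add_distrib, ← Finset.sum_sub_distrib]
  exact Finset.sum_congr rfl fun k _ => by ring

variable [DecidableEq K]

/-- The collision count `M(x)`: the number of pairs in `F × F` with the same dot product with `x`. -/
def collisions (F : Finset (Fin d → K)) (x : Fin d → K) : ℕ :=
  #{p ∈ F ×ˢ F | fqDot x p.1 = fqDot x p.2}

lemma collisions_smul (F : Finset (Fin d → K)) {s : K} (hs : s ≠ 0) (x : Fin d → K) :
    collisions F (s • x) = collisions F x := by
  simp [collisions, fqDot_smul, hs]

lemma collisions_eq_sum (F : Finset (Fin d → K)) (x : Fin d → K) (T : Finset K)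
    (hT : ∀ y ∈ F, fqDot x y ∈ T) :
    collisions F x = ∑ t ∈ T, #{y ∈ F | fqDot x y = t} ^ 2 := by
  unfold collisions
  rw [Finset.card_eq_sum_card_fiberwise (f := fun p => fqDot x p.1) (t := T)]
  · refine Finset.sum_congr rfl fun t _ => ?_
    rw [sq, ← Finset.card_product]
    congr 1
    ext p
    simp only [Finset.mem_filter, Finset.mem_product]
    grind
  · intro p hp
    have hp' : p ∈ F ×ˢ F := (Finset.mem_filter.1 hp).1
    exact hT _ (Finset.mem_product.1 hp').1

lemma sq_card_le (F : Finset (Fin d → K)) (x : Fin d → K) (T : Finset K)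
    (hT : ∀ y ∈ F, fqDot x y ∈ T) :
    (#F : ℝ) ^ 2 ≤ #T * (collisions F x : ℝ) := by
  have h := sq_sum_le_card_mul_sum_sq (s := T) (f := fun t => (#{y ∈ F | fqDot x y = t} : ℝ))
  rw [collisions_eq_sum F x T hT, Finset.card_eq_sum_card_fiberwise (f := fqDot x) (t := T) hT]
  push_cast
  exact h

variable [Fintype K]

lemma card_orthogonal (z : Fin d → K) (hz : z ≠ 0) :
    Fintype.card K * #{x : Fin d → K | fqDot x z = 0} = Fintype.card K ^ d := by
  let L : (Fin d → K) →ₗ[K] K :=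
    { toFun := fun x => fqDot x z
      map_add' := by intro a b; simp [fqDot, add_mul, Finset.sum_add_distrib]
      map_smul' := by intro a b; simp [fqDot_smul] }
  have hL : L ≠ 0 := by
    intro h
    apply hz
    ext k
    have := LinearMap.congr_fun h (Pi.single k 1)
    simpa [L, fqDot, Pi.single_apply] using this
  have hr := LinearMap.finrank_range_add_finrank_ker L
  rw [LinearMap.range_eq_top.2 (LinearMap.surjective hL), finrank_top, Module.finrank_self,
    Module.finrank_fin_fun] at hr
  have hk : #{x : Fin d → K | fqDot x z = 0} = Nat.card (LinearMap.ker L) := by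
    rw [← Nat.subtype_card _ (fun x => ?_)]
    simp only [Finset.mem_filter, Finset.mem_univ, true_and]
    rfl
  rw [hk, Module.natCard_eq_pow_finrank (K := K) (V := LinearMap.ker L),
    Nat.card_eq_fintype_card, ← pow_succ', add_comm, hr]

lemma sum_collisions (F : Finset (Fin d → K)) :
    Fintype.card K * ∑ x : Fin d → K, (collisions F x : ℝ) =
      Fintype.card K * (#F * (Fintype.card K : ℝ) ^ d)
        + ((#F : ℝ) ^ 2 - #F) * (Fintype.card K : ℝ) ^ d := by
  have h1 : ∑ x : Fin d → K, (collisions F x : ℝ) =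
      ∑ p ∈ F ×ˢ F, (#{x : Fin d → K | fqDot x (p.1 - p.2) = 0} : ℝ) := by
    simp only [collisions, Finset.card_filter, Nat.cast_sum, fqDot_sub, sub_eq_zero]
    exact Finset.sum_comm
  have h2 : ∀ p ∈ F ×ˢ F,
      (Fintype.card K : ℝ) * (#{x : Fin d → K | fqDot x (p.1 - p.2) = 0} : ℝ) =
        (Fintype.card K : ℝ) ^ d + if p.1 = p.2 then
          ((Fintype.card K : ℝ) - 1) * (Fintype.card K : ℝ) ^ d else 0 := by
    intro p _
    split_ifs with h
    · rw [h]
      simp [fqDot]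
      ring
    · have := card_orthogonal (p.1 - p.2) (sub_ne_zero.2 h)
      rw [add_zero]
      exact_mod_cast this
  have h3 : ∑ p ∈ F ×ˢ F, (if p.1 = p.2 then
      ((Fintype.card K : ℝ) - 1) * (Fintype.card K : ℝ) ^ d else 0) =
      #F * (((Fintype.card K : ℝ) - 1) * (Fintype.card K : ℝ) ^ d) := by
    rw [Finset.sum_product]
    simp
  rw [h1, Finset.mul_sum, Finset.sum_congr rfl h2, Finset.sum_add_distrib, h3]
  simp
  ring

lemma sum_excess (F : Finset (Fin d → K)) :
    ∑ x : Fin d → K, ((Fintype.card K : ℝ) * collisions F x - (#F : ℝ) ^ 2) =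
      ((Fintype.card K : ℝ) - 1) * (#F * (Fintype.card K : ℝ) ^ d) := by
  rw [Finset.sum_sub_distrib, ← Finset.mul_sum, sum_collisions]
  simp
  ring

/-- A punctured line through the origin meets a sphere of nonzero radius at most twice: if
`s • x = s' • x'` with both points on the sphere, then `s ^ 2 = s' ^ 2`. -/
lemma card_scalings_le {i : K} (hi : i ≠ 0) {E : Finset (Fin d → K)} (hE : E ⊆ sphereF i)
    (z : Fin d → K) : #{p ∈ E ×ˢ (univ : Finset Kˣ) | p.2 • p.1 = z} ≤ 2 := by
  rcases Finset.eq_empty_or_nonempty {p ∈ E ×ˢ (univ : Finset Kˣ) | p.2 • p.1 = z} with h | ⟨p, hp⟩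
  · simp [h]
  have hsph : ∀ p ∈ ({p ∈ E ×ˢ (univ : Finset Kˣ) | p.2 • p.1 = z} : Finset _),
      (p.2 : K) ^ 2 * i = ∑ k, z k ^ 2 := by
    intro p hp
    simp only [Finset.mem_filter, Finset.mem_product] at hp
    have h1 := hE hp.1.1
    simp only [sphereF, Finset.mem_filter] at h1
    rw [← hp.2, ← h1.2, Finset.mul_sum]
    simp [Units.smul_def, mul_pow]
  refine (Finset.card_le_card (t := {p, (-p.1, -p.2)}) ?_).trans Finset.card_le_two
  intro r hr
  have hsq : (r.2 : K) ^ 2 = (p.2 : K) ^ 2 :=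
    mul_right_cancel₀ hi ((hsph r hr).trans (hsph p hp).symm)
  have hrz := (Finset.mem_filter.1 hr).2
  have hpz := (Finset.mem_filter.1 hp).2
  have hx : r.1 = r.2⁻¹ • (p.2 • p.1) := by rw [hpz, ← hrz, inv_smul_smul]
  simp only [Finset.mem_insert, Finset.mem_singleton]
  rcases sq_eq_sq_iff_eq_or_eq_neg.1 hsq with h | h
  · left
    have h' : r.2 = p.2 := Units.ext h
    rw [h', inv_smul_smul] at hx
    exact Prod.ext hx h'
  · right
    have h' : r.2 = -p.2 := Units.ext h
    refine Prod.ext ?_ h'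
    rw [hx, h', ← mul_smul]
    simp [Units.smul_def]

lemma sum_le_of_homogeneous {i : K} (hi : i ≠ 0) {E : Finset (Fin d → K)} (hE : E ⊆ sphereF i)
    (g : (Fin d → K) → ℝ) (hg : ∀ x, 0 ≤ g x) (hom : ∀ (s : Kˣ) x, g (s • x) = g x) :
    ((Fintype.card K : ℝ) - 1) * ∑ x ∈ E, g x ≤ 2 * ∑ x, g x := by
  have hcard : (Fintype.card Kˣ : ℝ) = (Fintype.card K : ℝ) - 1 := by
    rw [Fintype.card_units, Nat.cast_sub Fintype.card_pos, Nat.cast_one]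
  calc ((Fintype.card K : ℝ) - 1) * ∑ x ∈ E, g x
      = ∑ p ∈ E ×ˢ (univ : Finset Kˣ), g (p.2 • p.1) := by
        rw [Finset.sum_product, Finset.mul_sum]
        simp [hom, hcard]
    _ = ∑ z, ∑ p ∈ E ×ˢ (univ : Finset Kˣ) with p.2 • p.1 = z, g (p.2 • p.1) :=
        (Finset.sum_fiberwise _ _ _).symm
    _ = ∑ z, (#{p ∈ E ×ˢ (univ : Finset Kˣ) | p.2 • p.1 = z} : ℝ) * g z := by
        refine Finset.sum_congr rfl fun z _ => ?_
        rw [Finset.sum_congr rfl (g := fun _ => g z), Finset.sum_const, nsmul_eq_mul]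
        intro p hp
        rw [(Finset.mem_filter.1 hp).2]
    _ ≤ ∑ z, 2 * g z := by
        refine Finset.sum_le_sum fun z _ => mul_le_mul_of_nonneg_right ?_ (hg z)
        exact_mod_cast card_scalings_le hi hE z
    _ = 2 * ∑ x, g x := by rw [Finset.mul_sum]

lemma sum_collisions_le {i : K} (hi : i ≠ 0) {E : Finset (Fin d → K)} (hE : E ⊆ sphereF i)
    (F : Finset (Fin d → K)) :
    (Fintype.card K : ℝ) * ∑ x ∈ E, (collisions F x : ℝ) ≤
      #E * (#F : ℝ) ^ 2 + 2 * (#F * (Fintype.card K : ℝ) ^ d) := by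
  have hq : (0 : ℝ) < (Fintype.card K : ℝ) - 1 := by
    have : (1 : ℝ) < Fintype.card K := by exact_mod_cast Fintype.one_lt_card
    linarith
  have h := sum_le_of_homogeneous hi hE
    (fun x => (Fintype.card K : ℝ) * collisions F x - (#F : ℝ) ^ 2)
    (fun x => sub_nonneg.2 (sq_card_le F x univ fun _ _ => mem_univ _))
    (fun s x => by
      simp only [Units.smul_def]
      rw [collisions_smul F s.ne_zero])
  rw [sum_excess, mul_left_comm] at h
  have h' := le_of_mul_le_mul_left h hq
  rw [Finset.sum_sub_distrib, ← Finset.mul_sum] at h'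
  simp only [Finset.sum_const, nsmul_eq_mul] at h'
  linarith

end Helpers

/-- distance set of subsets of spheres of nonzero radii. -/
theorem distSet_card_spheres (d : ℕ) (hd : 3 ≤ d) :
    ∃ C : ℝ, 1 < C ∧ ∃ c : ℝ, 0 < c ∧ c < 1 ∧
      ∀ (K : Type) [Field K] [Fintype K] [DecidableEq K],
        Odd (Fintype.card K) →
        ∀ i j : K, i ≠ 0 → j ≠ 0 →
        ∀ E F : Finset (Fin d → K), E ⊆ sphereF i → F ⊆ sphereF j →
          ((E.card : ℝ) * (F.card : ℝ) ≥ C * (Fintype.card K : ℝ) ^ d) →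
          ((distSet E F).card : ℝ) ≥ c * (Fintype.card K : ℝ) := by
  refine ⟨2, by norm_num, 1 / 2, by norm_num, by norm_num, ?_⟩
  intro K _ _ _ hodd i j hi hj E F hE hF hEF
  have h2 : (2 : K) ≠ 0 := by
    apply Ring.two_ne_zero
    intro h
    have := FiniteField.even_card_of_char_two h
    rw [Nat.odd_iff] at hodd
    omega
  have hq : (0 : ℝ) < Fintype.card K := by exact_mod_cast Fintype.card_pos
  -- `T` contains every dot product, by `‖x - y‖ = i + j - 2 x·y`.
  let T : Finset K := (distSet E F).image fun t => (i + j - t) / 2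
  have hTcard : (#T : ℝ) ≤ #(distSet E F) := by exact_mod_cast Finset.card_image_le
  have hT : ∀ x ∈ E, ∀ y ∈ F, fqDot x y ∈ T := by
    intro x hx y hy
    have hxi := hE hx
    have hyj := hF hy
    simp only [sphereF, Finset.mem_filter] at hxi hyj
    refine Finset.mem_image.2 ⟨∑ k, (x k - y k) ^ 2,
      Finset.mem_image.2 ⟨(x, y), Finset.mem_product.2 ⟨hx, hy⟩, rfl⟩, ?_⟩
    rw [sum_sub_sq, hxi.2, hyj.2]
    field_simp
    ring
  have hCS : (#E : ℝ) * (#F : ℝ) ^ 2 ≤ #T * ∑ x ∈ E, (collisions F x : ℝ) := by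
    rw [Finset.mul_sum, ← nsmul_eq_mul, ← Finset.sum_const]
    exact Finset.sum_le_sum fun x hx => sq_card_le F x T (hT x hx)
  have hM := sum_collisions_le hi hE F
  have hEFpos : (0 : ℝ) < (#E : ℝ) * #F := lt_of_lt_of_le (by positivity) hEF
  have hFpos : (0 : ℝ) < #F := by
    rcases (Nat.cast_nonneg (α := ℝ) #F).eq_or_lt with h | h
    · rw [← h, mul_zero] at hEFpos
      exact absurd hEFpos (lt_irrefl _)
    · exact h
  have hM' : (Fintype.card K : ℝ) * ∑ x ∈ E, (collisions F x : ℝ) ≤ 2 * (#E * #F * #F) := by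
    have := mul_le_mul_of_nonneg_right hEF hFpos.le
    nlinarith
  have hkey : (Fintype.card K : ℝ) * (#E * #F * #F) ≤ (2 * #T) * (#E * #F * #F) := by
    calc (Fintype.card K : ℝ) * (#E * #F * #F)
        = Fintype.card K * (#E * (#F : ℝ) ^ 2) := by ring
      _ ≤ Fintype.card K * (#T * ∑ x ∈ E, (collisions F x : ℝ)) := by gcongr
      _ = #T * (Fintype.card K * ∑ x ∈ E, (collisions F x : ℝ)) := by ring
      _ ≤ #T * (2 * (#E * #F * #F)) := by gcongr
      _ = (2 * #T) * (#E * #F * #F) := by ring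
  have := le_of_mul_le_mul_right hkey (mul_pos hEFpos hFpos)
  linarith
end
end

section
/- Let d ≥ 3. There exist constants C > 1 and 0 < c < 1, depending only on d, such that for every odd prime power q, every E ⊆ P and every F ⊆ F_q^d with |E||π(F)| ≥ C q^d, one has |Π(E,F)| ≥ c q. -/
/-!
The proof runs through additive characters. Choose `F' ⊆ F` on which the projection `π` is
injective with `π(F') = π(F)`, and let `N = |F'|`. For fixed `x`, let `Q x` be the number of
pairs `(y, y') ∈ F' × F'` with `x·y = x·y'`; Cauchy–Schwarz gives `N² ≤ |Π(E,F)| · Q x`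
(`sq_card_le_card_image_mul`). With `S ξ = ∑_{y ∈ F'} ψ(ξ·y)` for a primitive additive character
`ψ`, orthogonality gives `q · Q x = ∑_s ‖S (s x)‖²`. The term `s = 0` contributes `N²`; the terms
`s ≠ 0`, summed over `x ∈ E`, are bounded by Plancherel in two cases.

* If `x_d ≠ 0`, then `x` is the only point of `P` on the line through `0` and `x`, so the points
  `s x` are pairwise distinct and their contribution is at most `∑_ξ ‖S ξ‖² = q^d N`
  (`sum_nonisotropic_le`).
* If `x_d = 0`, then `S (s x)` depends only on `π(F')`, and Plancherel in `d - 1` dimensions, for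
  each of the at most `q` values of `s`, again bounds the contribution by `q · q^(d-1) N`
  (`sum_isotropic_le`).

Hence `q |E| N² ≤ |Π(E,F)| (|E| N² + 2 q^d N)`, and `C = 2`, `c = 1/2` work.
-/

open Finset

noncomputable section

/-- the paraboloid P ⊆ F_q^{n+1} : x₁² + ⋯ + x_n² = x_{n+1} -/
def parab {K : Type} [Field K] [Fintype K] [DecidableEq K] (n : ℕ) :
    Finset (Fin (n + 1) → K) :=
  univ.filter fun x => ∑ i : Fin n, (x i.castSucc) ^ 2 = x (Fin.last n)

/-- projection onto the first n coordinates -/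
def projFirst {K : Type} (n : ℕ) (x : Fin (n + 1) → K) : Fin n → K :=
  fun i => x i.castSucc

/-- Plancherel in the form used throughout: if the characters `x ↦ ψ (φ x b)` are orthogonal up to
the relation `R`, then the second moment of the exponential sum over `B` counts related pairs. -/
lemma sum_norm_sq_expSum {K X β : Type} [Field K] [Fintype K] [Fintype X]
    (ψ : AddChar K ℂ) (φ : X → β → K) (R : β → β → Prop) [DecidableRel R] (M : ℝ)
    (h : ∀ b b', ∑ x, ψ (φ x b - φ x b') = if R b b' then (M : ℂ) else 0) (B : Finset β) :
    ∑ x, ‖∑ b ∈ B, ψ (φ x b)‖ ^ 2 = M * (#{p ∈ B ×ˢ B | R p.1 p.2} : ℝ) := by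
  have key : ∀ x, ((‖∑ b ∈ B, ψ (φ x b)‖ ^ 2 : ℝ) : ℂ)
      = ∑ p ∈ B ×ˢ B, ψ (φ x p.1 - φ x p.2) := by
    intro x
    push_cast
    rw [← Complex.mul_conj', map_sum, sum_mul_sum, sum_product]
    refine sum_congr rfl fun b _ => sum_congr rfl fun b' _ => ?_
    rw [sub_eq_add_neg, AddChar.map_add_eq_mul, AddChar.map_neg_eq_conj]
  apply Complex.ofReal_injective
  rw [Complex.ofReal_sum]
  simp_rw [key]
  rw [sum_comm]
  simp_rw [h]
  rw [← sum_filter, sum_const]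
  push_cast
  rw [nsmul_eq_mul, mul_comm]

lemma fqDot_sub_right {K : Type} [Field K] {m : ℕ} (x v w : Fin m → K) :
    fqDot x (v - w) = fqDot x v - fqDot x w := by
  simp [fqDot, mul_sub]

lemma fqDot_smul_left {K : Type} [Field K] {m : ℕ} (s : K) (x v : Fin m → K) :
    fqDot (s • x) v = s * fqDot x v := by
  simp [fqDot, mul_sum, mul_assoc]

lemma sum_char_fqDot {K : Type} [Field K] [Fintype K] [DecidableEq K] {ψ : AddChar K ℂ}
    (hψ : ψ.IsPrimitive) {m : ℕ} (v : Fin m → K) :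
    ∑ ξ : Fin m → K, ψ (fqDot ξ v) = if v = 0 then (Fintype.card K : ℂ) ^ m else 0 := by
  have h1 : ∀ ξ : Fin m → K, ψ (fqDot ξ v) = ∏ i, ψ (ξ i * v i) := fun ξ => by
    simp only [fqDot]
    induction (univ : Finset (Fin m)) using Finset.cons_induction with
    | empty => simp
    | cons a s ha ih => rw [sum_cons, prod_cons, AddChar.map_add_eq_mul, ih]
  simp_rw [h1]
  rw [← Fintype.prod_sum (fun i a => ψ (a * v i))]
  simp_rw [AddChar.sum_mulShift _ hψ]
  split_ifs with hv
  · simp [hv]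
  · obtain ⟨i, hi⟩ := Function.ne_iff.mp hv
    exact prod_eq_zero (mem_univ i) (by simpa using hi)

/-- Plancherel for the indicator of a set parametrised injectively by `g` on `B`. -/
lemma plancherel_injOn {K β : Type} [Field K] [Fintype K] [DecidableEq K] {ψ : AddChar K ℂ}
    (hψ : ψ.IsPrimitive) {m : ℕ} (g : β → Fin m → K) (B : Finset β) (hg : Set.InjOn g B) :
    ∑ ξ : Fin m → K, ‖∑ b ∈ B, ψ (fqDot ξ (g b))‖ ^ 2 = (Fintype.card K : ℝ) ^ m * #B := by
  classical
  rw [sum_norm_sq_expSum ψ (fun ξ b => fqDot ξ (g b)) (fun b b' => g b = g b')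
    ((Fintype.card K : ℝ) ^ m)]
  · rw [← diag_card B]
    congr 3
    ext ⟨b, b'⟩
    simp only [mem_filter, mem_product, mem_diag]
    constructor
    · rintro ⟨⟨h1, h2⟩, h3⟩
      exact ⟨h1, hg h1 h2 h3⟩
    · rintro ⟨h1, h2⟩
      subst h2
      exact ⟨⟨h1, h1⟩, rfl⟩
  · intro b b'
    simp_rw [← fqDot_sub_right, sum_char_fqDot hψ, sub_eq_zero]
    push_cast
    rfl

/-- Cauchy–Schwarz over the fibres of `f`: a map from `B` into a small set `T` has many
collisions. -/
lemma sq_card_le_card_image_mul {α β : Type} [DecidableEq β] (B : Finset α) (f : α → β)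
    (T : Finset β) (hT : ∀ b ∈ B, f b ∈ T) :
    (#B : ℝ) ^ 2 ≤ #T * (#{p ∈ B ×ˢ B | f p.1 = f p.2} : ℝ) := by
  have h1 : (#B : ℝ) = ∑ t ∈ T, (#{b ∈ B | f b = t} : ℝ) := by
    exact_mod_cast card_eq_sum_card_fiberwise hT
  have h2 : (#{p ∈ B ×ˢ B | f p.1 = f p.2} : ℝ) = ∑ t ∈ T, (#{b ∈ B | f b = t} : ℝ) ^ 2 := by
    rw [card_eq_sum_card_fiberwise (f := fun p => f p.1) (t := T)]
    · push_cast
      refine sum_congr rfl fun t _ => ?_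
      rw [sq, ← Nat.cast_mul, ← card_product]
      congr 2
      ext ⟨a, b⟩
      simp only [mem_filter, mem_product]
      grind
    · intro p hp
      simp only [coe_filter, mem_product, Set.mem_ofPred_eq] at hp
      exact hT _ hp.1.1
  rw [h2, h1]
  exact sq_sum_le_card_mul_sum_sq

/-- Two points of the paraboloid with nonzero last coordinate on a common line through the origin
coincide, so the dilates `s • x` of such points are pairwise distinct. -/
lemma sum_nonisotropic_le {K : Type} [Field K] [Fintype K] [DecidableEq K] (n : ℕ)
    (E : Finset (Fin (n + 1) → K)) (hE : E ⊆ parab n) (h0 : ∀ x ∈ E, x (Fin.last n) ≠ 0)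
    (H : (Fin (n + 1) → K) → ℝ) (hH : ∀ ξ, 0 ≤ H ξ) :
    ∑ x ∈ E, ∑ s ∈ univ.erase (0 : K), H (s • x) ≤ ∑ ξ, H ξ := by
  rw [← sum_product']
  have inj : Set.InjOn (fun p : (Fin (n + 1) → K) × K => p.2 • p.1)
      (E ×ˢ univ.erase (0 : K) : Finset _) := by
    rintro ⟨x, s⟩ hx ⟨y, t⟩ hy hxy
    simp only [coe_product, Set.mem_prod, mem_coe, mem_erase, mem_univ, and_true] at hx hy
    obtain ⟨hx, hs⟩ := hx
    obtain ⟨hy, ht⟩ := hy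
    have hPx := hE hx
    have hPy := hE hy
    simp only [parab, mem_filter, mem_univ, true_and] at hPx hPy
    have hc : ∀ i, s * x i = t * y i := fun i => congrFun hxy i
    have hsq : s ^ 2 * x (Fin.last n) = t ^ 2 * y (Fin.last n) := by
      rw [← hPx, ← hPy, mul_sum, mul_sum]
      refine sum_congr rfl fun i _ => ?_
      rw [← mul_pow, ← mul_pow, hc]
    have hl := hc (Fin.last n)
    have hst : s = t := by
      have hne : t * y (Fin.last n) ≠ 0 := mul_ne_zero ht (h0 y hy)
      apply mul_right_cancel₀ hne
      linear_combination hsq - s * hl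
    subst hst
    exact Prod.ext (funext fun i => mul_left_cancel₀ hs (hc i)) rfl
  rw [← sum_image (f := H) inj]
  exact sum_le_univ_sum_of_nonneg hH

/-- A function of the first `n` coordinates, summed over dilates of points in the hyperplane
`x_{n+1} = 0`: for each fixed dilation factor these points project injectively. -/
lemma sum_isotropic_le {K : Type} [Field K] [Fintype K] [DecidableEq K] (n : ℕ)
    (E : Finset (Fin (n + 1) → K)) (h0 : ∀ x ∈ E, x (Fin.last n) = 0)
    (H : (Fin n → K) → ℝ) (hH : ∀ ξ, 0 ≤ H ξ) :
    ∑ x ∈ E, ∑ s ∈ univ.erase (0 : K), H (s • projFirst n x)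
      ≤ Fintype.card K * ∑ ξ, H ξ := by
  rw [sum_comm]
  have hs : ∀ s ∈ univ.erase (0 : K), ∑ x ∈ E, H (s • projFirst n x) ≤ ∑ ξ, H ξ := by
    intro s hs
    have hs0 : s ≠ 0 := ne_of_mem_erase hs
    have inj : Set.InjOn (fun x : Fin (n + 1) → K => s • projFirst n x) E := by
      intro x hx y hy hxy
      funext i
      induction i using Fin.lastCases with
      | last => rw [h0 x hx, h0 y hy]
      | cast i => exact mul_left_cancel₀ hs0 (congrFun hxy i)
    rw [← sum_image (f := H) inj]
    exact sum_le_univ_sum_of_nonneg hH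
  have hpos : 0 ≤ ∑ ξ, H ξ := sum_nonneg fun ξ _ => hH ξ
  refine (sum_le_sum hs).trans ?_
  rw [sum_const, nsmul_eq_mul]
  exact mul_le_mul_of_nonneg_right (by exact_mod_cast card_le_univ _) hpos

/-- The collision estimate: the number of triples `(x, y, y')` with `x·y = x·y'` exceeds its
expected value `|E| |B|² / q` by at most `2 q^n |B|`. -/
lemma sum_collisions_le_s11 {K : Type} [Field K] [Fintype K] [DecidableEq K] (n : ℕ)
    (E B : Finset (Fin (n + 1) → K)) (hE : E ⊆ parab n)
    (hB : Set.InjOn (projFirst n) (B : Set (Fin (n + 1) → K))) :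
    (Fintype.card K : ℝ) * ∑ x ∈ E, (#{p ∈ B ×ˢ B | fqDot x p.1 = fqDot x p.2} : ℝ)
      ≤ #E * (#B : ℝ) ^ 2 + 2 * (Fintype.card K : ℝ) ^ (n + 1) * #B := by
  have hψ := AddChar.FiniteField.primitiveChar_to_Complex_isPrimitive K
  set ψ := AddChar.FiniteField.primitiveChar_to_Complex K
  set S : (Fin (n + 1) → K) → ℝ := fun ξ => ‖∑ y ∈ B, ψ (fqDot ξ y)‖ ^ 2 with hS
  set T : (Fin n → K) → ℝ := fun ξ => ‖∑ y ∈ B, ψ (fqDot ξ (projFirst n y))‖ ^ 2 with hT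
  have hS0 : ∀ ξ, 0 ≤ S ξ := fun ξ => by positivity
  have hT0 : ∀ ξ, 0 ≤ T ξ := fun ξ => by positivity
  have hQ : ∀ x : Fin (n + 1) → K,
      (Fintype.card K : ℝ) * (#{p ∈ B ×ˢ B | fqDot x p.1 = fqDot x p.2} : ℝ)
        = (#B : ℝ) ^ 2 + ∑ s ∈ univ.erase (0 : K), S (s • x) := by
    intro x
    rw [← sum_norm_sq_expSum ψ (fun (s : K) y => fqDot (s • x) y)
      (fun y y' => fqDot x y = fqDot x y') (Fintype.card K : ℝ) _ B,
      ← add_sum_erase _ _ (mem_univ (0 : K))]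
    · congr 1
      simp [fqDot]
    · intro y y'
      simp_rw [fqDot_smul_left, ← mul_sub, AddChar.sum_mulShift _ hψ, sub_eq_zero]
      push_cast
      rfl
  have hPS : ∑ ξ, S ξ = (Fintype.card K : ℝ) ^ (n + 1) * #B :=
    plancherel_injOn hψ (fun y => y) B fun _ _ _ _ h => h
  have hPT : ∑ ξ, T ξ = (Fintype.card K : ℝ) ^ n * #B :=
    plancherel_injOn hψ (projFirst n) B hB
  have hST : ∀ x ∈ E.filter (fun x => x (Fin.last n) = 0), ∀ s : K,
      S (s • x) = T (s • projFirst n x) := by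
    intro x hx s
    have hx0 := (mem_filter.mp hx).2
    simp only [hS, hT]
    congr 2
    refine sum_congr rfl fun y _ => ?_
    congr 1
    simp only [fqDot, Fin.sum_univ_castSucc]
    simp [projFirst, hx0]
  have hI : ∑ x ∈ E with x (Fin.last n) = 0, ∑ s ∈ univ.erase (0 : K), S (s • x)
      ≤ (Fintype.card K : ℝ) ^ (n + 1) * #B := by
    rw [sum_congr rfl fun x hx => sum_congr rfl fun s _ => hST x hx s]
    refine (sum_isotropic_le n _ (fun x hx => (mem_filter.mp hx).2) T hT0).trans_eq ?_
    rw [hPT]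
    ring
  have hN : ∑ x ∈ E with ¬ x (Fin.last n) = 0, ∑ s ∈ univ.erase (0 : K), S (s • x)
      ≤ (Fintype.card K : ℝ) ^ (n + 1) * #B :=
    (sum_nonisotropic_le n _ ((filter_subset _ _).trans hE)
      (fun x hx => (mem_filter.mp hx).2) S hS0).trans_eq hPS
  rw [mul_sum, sum_congr rfl fun x _ => hQ x, sum_add_distrib, sum_const, nsmul_eq_mul,
    ← sum_filter_add_sum_filter_not E (fun x => x (Fin.last n) = 0)]
  linarith

/-- d = n+1 ≥ 3: if E ⊆ P and |E||π(F)| ≥ C q^d, then |Π(E,F)| ≥ cq. -/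
theorem dotSet_card_parab_proj (n : ℕ) (hd : 3 ≤ n + 1) :
    ∃ C : ℝ, 1 < C ∧ ∃ c : ℝ, 0 < c ∧ c < 1 ∧
      ∀ (K : Type) [Field K] [Fintype K] [DecidableEq K],
        Odd (Fintype.card K) →
        ∀ E F : Finset (Fin (n + 1) → K), E ⊆ parab n →
          ((E.card : ℝ) * ((F.image (projFirst n)).card : ℝ) ≥
            C * (Fintype.card K : ℝ) ^ (n + 1)) →
          ((dotSet E F).card : ℝ) ≥ c * (Fintype.card K : ℝ) := by
  refine ⟨2, by norm_num, 1 / 2, by norm_num, by norm_num, ?_⟩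
  intro K _ _ _ _ E F hE hcard
  obtain ⟨B, hBF, hB, hBi⟩ := Finset.exists_subset_injOn_image_eq_of_surjOn F
    (F.image (projFirst n)) (f := projFirst n) (by simp [Set.SurjOn])
  have hBcard : #(F.image (projFirst n)) = #B := by
    rw [← hBi, card_image_of_injOn hB]
  rw [hBcard] at hcard
  have hq : (0 : ℝ) < Fintype.card K := by exact_mod_cast Fintype.card_pos
  have hqn : (0 : ℝ) < (Fintype.card K : ℝ) ^ (n + 1) := by positivity
  have hCS : ∀ x ∈ E, (#B : ℝ) ^ 2
      ≤ #(dotSet E F) * (#{p ∈ B ×ˢ B | fqDot x p.1 = fqDot x p.2} : ℝ) := by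
    intro x hx
    refine sq_card_le_card_image_mul B (fqDot x) _ fun y hy => ?_
    exact mem_image.mpr ⟨(x, y), mem_product.mpr ⟨hx, hBF hy⟩, rfl⟩
  have hsum := sum_le_sum hCS
  rw [sum_const, nsmul_eq_mul, ← mul_sum] at hsum
  have hcol := sum_collisions_le_s11 n E B hE hB
  have hEB : (0 : ℝ) < #E * #B := by linarith
  have hBpos : (0 : ℝ) < #B := pos_of_mul_pos_right hEB (by positivity)
  have hmain : (0 : ℝ) < #E * (#B : ℝ) ^ 2 := by nlinarith
  have hcol' : (Fintype.card K : ℝ) * ∑ x ∈ E,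
      (#{p ∈ B ×ˢ B | fqDot x p.1 = fqDot x p.2} : ℝ) ≤ 2 * (#E * (#B : ℝ) ^ 2) := by
    nlinarith
  have hfin : (Fintype.card K : ℝ) * (#E * (#B : ℝ) ^ 2)
      ≤ #(dotSet E F) * 2 * (#E * (#B : ℝ) ^ 2) := by
    have h1 := mul_le_mul_of_nonneg_left hsum hq.le
    have h2 := mul_le_mul_of_nonneg_left hcol' (Nat.cast_nonneg (α := ℝ) #(dotSet E F))
    linarith
  have := le_of_mul_le_mul_right hfin hmain
  linarith
end
end
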